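/- lim_{N→∞} Σ_{n=−N+1}^{N−1} Σ_{m∈ℤ} (−1)^{m+n} / (m² + 5(3n+1)²) = (π/(9√5)) · log( 8(4 − √15) ). -/

import Mathlib

section
open Filter

/-- Gaussian binomial coefficients. -/
def gb (p : ℝ) : ℕ → ℕ → ℝ
  | _, 0 => 1
  | 0, _ + 1 => 0
  | M + 1, k + 1 => p ^ (k + 1) * gb p M (k + 1) + gb p M k

/-- The finite product `(p;p)_n`. -/
def qp (p : ℝ) (n : ℕ) : ℝ := ∏ i ∈ Finset.range n, (1 - p ^ (i + 1))

lemma gb_zero_right (p : ℝ) (M : ℕ) : gb p M 0 = 1 := by cases M <;> rfl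

lemma gb_eq_zero (p : ℝ) (M : ℕ) : ∀ k, M < k → gb p M k = 0 := by
  induction M with
  | zero => intro k hk; obtain ⟨j, rfl⟩ := Nat.exists_eq_succ_of_ne_zero hk.ne'; rfl
  | succ M ih =>
    intro k hk
    obtain ⟨j, rfl⟩ := Nat.exists_eq_succ_of_ne_zero (by omega : k ≠ 0)
    show p ^ (j + 1) * gb p M (j + 1) + gb p M j = 0
    rw [ih _ (by omega), ih _ (by omega)]; simp

lemma qp_succ (p : ℝ) (n : ℕ) : qp p (n + 1) = qp p n * (1 - p ^ (n + 1)) := by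
  simp [qp, Finset.prod_range_succ]

lemma gb_qp (p : ℝ) (M : ℕ) : ∀ k m, m + k = M → gb p M k * (qp p k * qp p m) = qp p M := by
  induction M with
  | zero => intro k m h; obtain rfl : k = 0 := by omega
            obtain rfl : m = 0 := by omega
            simp [gb_zero_right, qp]
  | succ M ih =>
    intro k m h
    rcases k with _ | k
    · obtain rfl : m = M + 1 := by omega
      simp [gb_zero_right, qp]
    · have e : gb p (M + 1) (k + 1) = p ^ (k + 1) * gb p M (k + 1) + gb p M k := rfl
      rw [e]
      have h2 := ih k m (by omega)
      rcases m with _ | m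
      · rw [gb_eq_zero p M (k + 1) (by omega)]
        obtain rfl : k = M := by omega
        rw [qp_succ]
        linear_combination (1 - p ^ (k + 1)) * h2
      · have h1 := ih (k + 1) m (by omega)
        rw [qp_succ] at h1 h2
        rw [qp_succ, qp_succ, qp_succ]
        have : p ^ (M + 1) = p ^ (k + 1) * p ^ (m + 1) := by rw [← pow_add]; congr 1; omega
        rw [this]
        linear_combination p ^ (k + 1) * (1 - p ^ (m + 1)) * h1 + (1 - p ^ (k + 1)) * h2

lemma qbinom (p : ℝ) (M : ℕ) : ∀ x : ℝ, ∏ k ∈ Finset.range M, (1 + x * p ^ k) =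
    ∑ k ∈ Finset.range (M + 1), p ^ (k.choose 2) * gb p M k * x ^ k := by
  induction M with
  | zero => intro x; simp [gb_zero_right]
  | succ M ih =>
    intro x
    rw [Finset.prod_range_succ', Finset.prod_congr rfl (g := fun k => (1 + (x * p) * p ^ k))
      (fun k _ => by ring), ih, Finset.sum_range_succ' _ (M + 1)]
    have e : ∀ k, p ^ ((k+1).choose 2) * gb p (M + 1) (k + 1) * x ^ (k+1)
       = p ^ ((k+1).choose 2) * gb p M (k + 1) * (x * p) ^ (k+1)
        + x * (p ^ (k.choose 2) * gb p M k * (x * p) ^ k) := by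
      intro k
      have e : gb p (M + 1) (k + 1) = p ^ (k + 1) * gb p M (k + 1) + gb p M k := rfl
      have h : (k+1).choose 2 = k + k.choose 2 := by
        rw [Nat.choose_succ_succ' k 1]; simp
      rw [e, h, pow_add p k]; ring
    rw [Finset.sum_congr rfl (fun k _ => e k), Finset.sum_add_distrib, ← Finset.mul_sum]
    have h3 := Finset.sum_range_succ' (fun k => p ^ (k.choose 2) * gb p M k * (x * p) ^ k) (M + 1)
    rw [Finset.sum_range_succ, gb_eq_zero p M (M+1) (by omega)] at h3
    simp [gb_zero_right] at h3 ⊢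
    linear_combination h3

lemma two_choose (k : ℕ) : (2 * (k.choose 2 : ℤ)) = k * (k - 1) := by
  induction k with
  | zero => simp
  | succ k ih =>
    have h : (k+1).choose 2 = k + k.choose 2 := by
      rw [Nat.choose_succ_succ' k 1]; simp
    rw [h]; push_cast; linear_combination ih

/-- finite Jacobi triple product -/
lemma finite_jtp (q z : ℝ) (hq : 0 < q) (hz : z ≠ 0) (N : ℕ) :
    ∏ k ∈ Finset.range N, ((1 + z * q ^ (2 * k + 1)) * (1 + z⁻¹ * q ^ (2 * k + 1))) =
    ∑ k ∈ Finset.range (2 * N + 1), gb (q ^ 2) (2 * N) k *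
      (q ^ (((k : ℤ) - N) ^ 2) * z ^ ((k : ℤ) - N)) := by
  have hq' := hq.ne'
  have h := qbinom (q ^ 2) (2 * N) (z * q ^ (1 - 2 * (N : ℤ)))
  have h1 : ∏ k ∈ Finset.range (2 * N), (1 + z * q ^ (1 - 2 * (N : ℤ)) * (q ^ 2) ^ k) =
     (z ^ N * (q ^ (N ^ 2))⁻¹) * ∏ k ∈ Finset.range N, ((1 + z * q ^ (2 * k + 1)) * (1 + z⁻¹ * q ^ (2 * k + 1))) := by
    rw [two_mul N, Finset.prod_range_add, Finset.prod_mul_distrib, ← Finset.prod_range_reflect]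
    have h2 : ∀ i ∈ Finset.range N, (1 + z * q ^ (1 - (2 * (N : ℤ))) * (q ^ 2) ^ (N - 1 - i)) =
       (z * (q ^ (2 * i + 1))⁻¹) * (1 + z⁻¹ * q ^ (2 * i + 1)) := by
      intro i hi
      have hi := Finset.mem_range.1 hi
      have : q ^ (1 - (2 * (N : ℤ))) * (q ^ 2) ^ (N - 1 - i) = (q ^ (2 * i + 1))⁻¹ := by
        rw [← pow_mul, ← zpow_natCast, ← zpow_natCast, ← zpow_neg, ← zpow_add₀ hq']
        congr 1
        omega
      rw [mul_assoc, this]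
      have := pow_ne_zero (2 * i + 1) hq'
      field_simp
      ring
    rw [Finset.prod_congr rfl h2, Finset.prod_mul_distrib]
    have h3 : ∏ i ∈ Finset.range N, (z * (q ^ (2 * i + 1))⁻¹) = z ^ N * (q ^ (N ^ 2))⁻¹ := by
      clear h h2
      induction N with
      | zero => simp
      | succ n ih => rw [Finset.prod_range_succ, ih]
                     have : (n + 1) ^ 2 = n ^ 2 + (2 * n + 1) := by ring
                     rw [this, pow_add q]; 
                     rw [mul_inv]; ring
    rw [h3]
    have h4 : ∀ i ∈ Finset.range N, (1 + z * q ^ (1 - (2 * (N : ℤ))) * (q ^ 2) ^ (N + i)) =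
       (1 + z * q ^ (2 * i + 1)) := by
      intro i hi
      have : q ^ (1 - (2 * (N : ℤ))) * (q ^ 2) ^ (N + i) = (q ^ (2 * i + 1)) := by
        rw [← pow_mul, ← zpow_natCast, ← zpow_natCast, ← zpow_add₀ hq']
        congr 1
        push_cast; ring
      rw [mul_assoc, this]
    rw [Finset.prod_congr rfl h4]
    ring
  rw [h1] at h
  have hne : z ^ N * (q ^ (N ^ 2))⁻¹ ≠ 0 := by positivity
  apply mul_left_cancel₀ hne
  rw [h, Finset.mul_sum]
  apply Finset.sum_congr rfl
  intro k _
  have e1 : z ^ N * z ^ ((k:ℤ) - N) = z ^ k := by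
    rw [← zpow_natCast, ← zpow_natCast, ← zpow_add₀ hz]; congr 1; ring
  have e2 : (q ^ (N ^ 2))⁻¹ * q ^ (((k : ℤ) - N) ^ 2) = (q ^ 2) ^ (k.choose 2) * (q ^ (1 - 2 * (N : ℤ))) ^ k := by
    rw [← zpow_natCast, ← zpow_natCast, ← zpow_natCast, ← zpow_natCast, ← zpow_neg, ← zpow_mul, ← zpow_mul, ← zpow_add₀ hq', ← zpow_add₀ hq']
    congr 1
    have : (2 * (k.choose 2 : ℤ)) = k * (k - 1) := by
      exact two_choose k
    push_cast
    rw [this]; ring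
  rw [mul_pow z]
  linear_combination (-gb (q ^ 2) (2 * N) k) * z ^ k * e2 + (- gb (q ^ 2) (2 * N) k * (q ^ (N ^ 2))⁻¹ * q ^ (((k : ℤ) - N) ^ 2)) * e1

lemma qp_limit (p : ℝ) (h0 : 0 < p) (h1 : p < 1) : ∃ L : ℝ, 0 < L ∧ Tendsto (qp p) atTop (nhds L) ∧
    (∀ n, L ≤ qp p n) ∧ (∀ n, qp p n ≤ 1) := by
  have hs : Summable (fun i : ℕ => ‖(-p ^ (i + 1) : ℝ)‖) := by
    have : Summable (fun i : ℕ => p ^ (i + 1)) :=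
      (summable_nat_add_iff 1).2 (summable_geometric_of_lt_one h0.le h1)
    refine this.congr (fun i => ?_)
    rw [norm_neg, Real.norm_of_nonneg (by positivity)]
  have hlt : ∀ i : ℕ, p ^ (i + 1) < 1 := fun i => pow_lt_one₀ h0.le h1 (by omega)
  have hm := multipliable_one_add_of_summable hs
  have ht : Tendsto (qp p) atTop (nhds (∏' i : ℕ, (1 + -p ^ (i + 1)))) := by
    have := hm.hasProd.tendsto_prod_nat
    refine this.congr (fun n => ?_)
    simp [qp, sub_eq_add_neg]
  have hne : ∏' i : ℕ, (1 + -p ^ (i + 1)) ≠ 0 := by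
    apply tprod_one_add_ne_zero_of_summable _ hs
    intro i
    have := hlt i
    linarith
  have hpos : ∀ n, 0 < qp p n := by
    intro n
    apply Finset.prod_pos
    intro i _
    have := hlt i
    linarith
  have hanti : Antitone (qp p) := by
    apply antitone_nat_of_succ_le
    intro n
    rw [qp_succ]
    have := hpos n
    have : 0 < p ^ (n + 1) := by positivity
    nlinarith
  refine ⟨_, lt_of_le_of_ne (ge_of_tendsto' ht (fun n => (hpos n).le)) hne.symm, ht,
    fun n => hanti.le_of_tendsto ht n, fun n => ?_⟩
  have := hanti (Nat.zero_le n)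
  simpa [qp] using this

lemma zpow_eq_exp (x : ℝ) (h : 0 < x) (n : ℤ) : x ^ n = Real.exp (n * Real.log x) := by
  rw [← Real.rpow_intCast, Real.rpow_def_of_pos h, mul_comm]

lemma theta_summable (q z : ℝ) (h0 : 0 < q) (h1 : q < 1) (hz : z ≠ 0) :
    Summable (fun j : ℤ => q ^ (j ^ 2) * z ^ j) := by
  have hz' : 0 < |z| := abs_pos.2 hz
  have h := (summable_jacobiTheta₂_term_iff (Complex.I * ((- Real.log |z| / (2 * Real.pi) : ℝ) : ℂ))
    (Complex.I * ((- Real.log q / Real.pi : ℝ) : ℂ))).2 (by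
      simp only [Complex.mul_im, Complex.I_re, Complex.I_im, Complex.ofReal_re, Complex.ofReal_im]
      have := Real.log_neg h0 h1
      have := Real.pi_pos
      have : 0 < -Real.log q / Real.pi := by apply div_pos <;> linarith
      linarith)
  rw [← summable_norm_iff] at h ⊢
  refine h.congr (fun j => ?_)
  rw [norm_jacobiTheta₂_term]
  simp only [Complex.mul_im, Complex.I_re, Complex.I_im, Complex.ofReal_re, Complex.ofReal_im]
  rw [norm_mul, norm_zpow, norm_zpow, Real.norm_eq_abs, Real.norm_eq_abs, abs_of_pos h0]
  rw [zpow_eq_exp q h0, zpow_eq_exp _ hz', ← Real.exp_add]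
  congr 1
  have := Real.pi_ne_zero
  push_cast
  field_simp
  ring

lemma jtp (q : ℝ) (h0 : 0 < q) (h1 : q < 1) : ∃ C : ℝ, 0 < C ∧ ∀ z : ℝ, z ≠ 0 →
    Tendsto (fun N : ℕ => ∏ k ∈ Finset.range N, ((1 + z * q ^ (2 * k + 1)) * (1 + z⁻¹ * q ^ (2 * k + 1))))
      atTop (nhds (C * ∑' j : ℤ, q ^ (j ^ 2) * z ^ j)) := by
  obtain ⟨L, hL, ht, hle, hge⟩ := qp_limit (q ^ 2) (by positivity) (by nlinarith)
  refine ⟨L⁻¹, by positivity, fun z hz => ?_⟩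
  have hpos : ∀ n, 0 < qp (q ^ 2) n := fun n => hL.trans_le (hle n)
  let f : ℕ → ℤ → ℝ := fun N j => if j ∈ Finset.Icc (-(N:ℤ)) N then
      gb (q ^ 2) (2 * N) (N + j).toNat * (q ^ (j ^ 2) * z ^ j) else 0
  have hgb : ∀ (N : ℕ) (j : ℤ), j ∈ Finset.Icc (-(N:ℤ)) N → gb (q ^ 2) (2 * N) (N + j).toNat =
     qp (q ^ 2) (2 * N) / (qp (q ^ 2) (N + j).toNat * qp (q ^ 2) (N - j).toNat) := by
    intro N j hj
    rw [Finset.mem_Icc] at hj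
    rw [← gb_qp (q ^ 2) (2 * N) (N + j).toNat (N - j).toNat (by omega)]
    have := hpos (N + j).toNat
    have := hpos (N - j).toNat
    field_simp
  have hF : ∀ N : ℕ, ∏ k ∈ Finset.range N, ((1 + z * q ^ (2 * k + 1)) * (1 + z⁻¹ * q ^ (2 * k + 1)))
      = ∑' j : ℤ, f N j := by
    intro N
    rw [finite_jtp q z h0 hz N, tsum_eq_sum (s := Finset.Icc (-(N:ℤ)) N)]
    · refine Finset.sum_bij (fun k _ => (k : ℤ) - N) ?_ ?_ ?_ ?_
      · intro k hk; rw [Finset.mem_range] at hk; rw [Finset.mem_Icc]; omega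
      · intro a _ b _ h; simpa using h
      · intro j hj; rw [Finset.mem_Icc] at hj
        exact ⟨(N + j).toNat, by rw [Finset.mem_range]; omega, by omega⟩
      · intro k hk
        rw [Finset.mem_range] at hk
        simp only [f]
        rw [if_pos (by rw [Finset.mem_Icc]; omega)]
        have : ((N:ℤ) + (k - N)).toNat = k := by omega
        rw [this]
    · intro j hj
      simp only [f]
      rw [if_neg hj]
  simp_rw [hF]
  rw [← tsum_mul_left]
  refine tendsto_tsum_of_dominated_convergence
    (bound := fun j => (L⁻¹ * L⁻¹) * ‖q ^ (j ^ 2) * z ^ j‖) ?_ ?_ ?_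
  · exact (theta_summable q z h0 h1 hz).norm.mul_left _
  · intro j
    have e1 : Tendsto (fun N : ℕ => 2 * N) atTop atTop := tendsto_id.const_mul_atTop' (by norm_num)
    have e2 : Tendsto (fun N : ℕ => ((N:ℤ) + j).toNat) atTop atTop := by
      refine tendsto_atTop.2 (fun b => ?_)
      filter_upwards [eventually_ge_atTop (b + j.natAbs)] with N hN
      omega
    have e3 : Tendsto (fun N : ℕ => ((N:ℤ) - j).toNat) atTop atTop := by
      refine tendsto_atTop.2 (fun b => ?_)
      filter_upwards [eventually_ge_atTop (b + j.natAbs)] with N hN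
      omega
    have e4 := ((ht.comp e1).div ((ht.comp e2).mul (ht.comp e3)) (by positivity)).mul_const (q ^ (j ^ 2) * z ^ j)
    have e5 : L / (L * L) = L⁻¹ := by field_simp
    rw [e5] at e4
    refine e4.congr' ?_
    filter_upwards [eventually_ge_atTop (j.natAbs)] with N hN
    have hj : j ∈ Finset.Icc (-(N:ℤ)) N := by rw [Finset.mem_Icc]; omega
    simp only [f]
    rw [if_pos hj, hgb N j hj]
    rfl
  · refine Eventually.of_forall (fun N j => ?_)
    simp only [f]
    split_ifs with hj
    · rw [hgb N j hj, norm_mul]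
      refine mul_le_mul_of_nonneg_right ?_ (norm_nonneg _)
      have a1 := hpos (N + j).toNat
      have a2 := hpos (N - j).toNat
      have a3 := hpos (2 * N)
      rw [Real.norm_of_nonneg (by positivity), ← mul_inv, ← one_div]
      apply div_le_div₀ zero_le_one (hge _) (by positivity)
      exact mul_le_mul (hle _) (hle _) hL.le a1.le
    · rw [norm_zero]; positivity

end

section
open Filter

lemma prod_limit (f : ℕ → ℝ) (hs : Summable (fun i => ‖f i‖)) (hp : ∀ i, 0 < 1 + f i) :
    ∃ L : ℝ, 0 < L ∧ Tendsto (fun N : ℕ => ∏ i ∈ Finset.range N, (1 + f i)) atTop (nhds L) := by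
  have hm := multipliable_one_add_of_summable hs
  have ht := hm.hasProd.tendsto_prod_nat
  refine ⟨_, lt_of_le_of_ne (ge_of_tendsto' ht (fun n => ?_)) 
    (tprod_one_add_ne_zero_of_summable (fun i => (hp i).ne') hs).symm, ht⟩
  exact Finset.prod_nonneg (fun i _ => (hp i).le)

lemma summable_odd_pow (q : ℝ) (h0 : 0 < q) (h1 : q < 1) :
    Summable (fun k : ℕ => q ^ (2 * k + 1)) := by
  have := (summable_geometric_of_lt_one (r := q ^ 2) (by positivity) (by nlinarith)).mul_left q
  refine this.congr (fun k => ?_)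
  rw [← pow_mul]; ring

lemma theta_ratio (q : ℝ) (h0 : 0 < q) (h1 : q < 1) : ∃ A : ℝ, 0 < A ∧
    Tendsto (fun N : ℕ => ∏ k ∈ Finset.range N, (1 + q ^ (2 * k + 1))) atTop (nhds A) ∧
    0 < (∑' j : ℤ, q ^ (j ^ 2)) ∧ 0 < (∑' j : ℤ, q ^ (j ^ 2) * q ^ j) ∧
    0 < (∑' j : ℤ, q ^ (j ^ 2) * (-1) ^ j) ∧
    2 * (∑' j : ℤ, q ^ (j ^ 2)) ^ 2 =
      A ^ 6 * ((∑' j : ℤ, q ^ (j ^ 2) * q ^ j) * (∑' j : ℤ, q ^ (j ^ 2) * (-1) ^ j)) := by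
  have hodd := summable_odd_pow q h0 h1
  have heven : Summable (fun k : ℕ => q ^ (2 * k + 2)) := by
    refine (hodd.mul_left q).congr (fun k => ?_)
    ring
  have hlt : ∀ k : ℕ, q ^ (k + 1) < 1 := fun i => pow_lt_one₀ h0.le h1 (by omega)
  have hgt : ∀ k : ℕ, 0 < q ^ k := fun i => by positivity
  obtain ⟨A, hA, hAt⟩ := prod_limit (fun k => q ^ (2 * k + 1)) hodd.norm (fun k => by positivity)
  obtain ⟨E, hE, hEt⟩ := prod_limit (fun k => q ^ (2 * k + 2)) heven.norm (fun k => by positivity)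
  obtain ⟨B, hB, hBt⟩ := prod_limit (fun k => -q ^ (2 * k + 1)) hodd.neg.norm (fun k => by
    have := hlt (2 * k); linarith)
  obtain ⟨D, hD, hDt, -, -⟩ := qp_limit (q ^ 2) (by positivity) (by nlinarith)
  have hfin : ∀ N : ℕ, (∏ k ∈ Finset.range N, (1 + q ^ (2 * k + 1))) *
      (∏ k ∈ Finset.range N, (1 + -q ^ (2 * k + 1))) * (∏ k ∈ Finset.range N, (1 + q ^ (2 * k + 2)))
      * qp (q ^ 2) N = qp (q ^ 2) (2 * N) := by
    intro N
    induction N with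
    | zero => simp [qp]
    | succ n ih =>
      rw [Finset.prod_range_succ, Finset.prod_range_succ, Finset.prod_range_succ, qp_succ,
        show 2 * (n + 1) = 2 * n + 1 + 1 by ring, qp_succ, qp_succ, ← ih]
      ring
  have e1 : Tendsto (fun N : ℕ => 2 * N) atTop atTop := tendsto_id.const_mul_atTop' (by norm_num)
  have hABE : A * B * E = 1 := by
    have := tendsto_nhds_unique ((((hAt.mul hBt).mul hEt).mul hDt).congr hfin) (hDt.comp e1)
    exact mul_right_cancel₀ hD.ne' (by rw [this, one_mul])
  obtain ⟨C, hC, hj⟩ := jtp q h0 h1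
  have j1 : C * (∑' j : ℤ, q ^ (j ^ 2)) = A * A := by
    have h := hj 1 one_ne_zero
    simp only [one_zpow, mul_one, one_mul, inv_one] at h
    refine tendsto_nhds_unique h ((hAt.mul hAt).congr (fun N => ?_))
    rw [Finset.prod_mul_distrib]
  have j2 : C * (∑' j : ℤ, q ^ (j ^ 2) * (-1) ^ j) = B * B := by
    have h := hj (-1) (by norm_num)
    refine tendsto_nhds_unique h ((hBt.mul hBt).congr (fun N => ?_))
    rw [Finset.prod_mul_distrib]
    norm_num
  have j3 : C * (∑' j : ℤ, q ^ (j ^ 2) * q ^ j) = 2 * (E * E) := by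
    have h := hj q h0.ne'
    have h' := h.comp (tendsto_add_atTop_nat 1)
    refine tendsto_nhds_unique h' (((((hEt.comp (tendsto_add_atTop_nat 1)).mul hEt)).const_mul 2).congr (fun N => ?_))
    simp only [Function.comp]
    rw [Finset.prod_mul_distrib]
    have a1 : ∏ k ∈ Finset.range (N + 1), (1 + q⁻¹ * q ^ (2 * k + 1)) = 2 * ∏ k ∈ Finset.range N, (1 + q ^ (2 * k + 2)) := by
      rw [Finset.prod_range_succ']
      have : ∀ k : ℕ, q⁻¹ * q ^ (2 * k + 1) = q ^ (2 * k) := by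
        intro k; rw [pow_succ]; field_simp
      simp_rw [this]
      simp only [mul_zero, pow_zero, mul_add, mul_one]
      norm_num
      ring
    have a2 : ∏ k ∈ Finset.range (N + 1), (1 + q * q ^ (2 * k + 1)) = ∏ k ∈ Finset.range (N + 1), (1 + q ^ (2 * k + 2)) := by
      refine Finset.prod_congr rfl (fun k _ => ?_)
      ring
    rw [a1, a2]; ring
  refine ⟨A, hA, hAt, ?_, ?_, ?_, ?_⟩
  · exact pos_of_mul_pos_right (a := C) (by rw [j1]; positivity) hC.le
  · exact pos_of_mul_pos_right (a := C) (by rw [j3]; positivity) hC.le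
  · exact pos_of_mul_pos_right (a := C) (by rw [j2]; positivity) hC.le
  · apply mul_left_cancel₀ (pow_ne_zero 2 hC.ne')
    generalize (∑' j : ℤ, q ^ (j ^ 2)) = t3 at *
    generalize (∑' j : ℤ, q ^ (j ^ 2) * q ^ j) = t2 at *
    generalize (∑' j : ℤ, q ^ (j ^ 2) * (-1) ^ j) = t4 at *
    calc C ^ 2 * (2 * t3 ^ 2) = 2 * (C * t3) ^ 2 := by ring
      _ = 2 * A ^ 4 * 1 ^ 2 := by rw [j1]; ring
      _ = A ^ 6 * ((2 * (E * E)) * (B * B)) := by rw [← hABE]; ring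
      _ = _ := by rw [← j2, ← j3]; ring

end

section
open Filter Complex

/-- `exp (π i x τ)` -/
noncomputable def ee (τ x : ℂ) : ℂ := cexp (Real.pi * I * x * τ)
noncomputable def th3 (τ : ℂ) : ℂ := ∑' n : ℤ, ee τ (n ^ 2)
noncomputable def th4 (τ : ℂ) : ℂ := ∑' n : ℤ, (-1) ^ n * ee τ (n ^ 2)
noncomputable def th2 (τ : ℂ) : ℂ := ∑' n : ℤ, ee τ ((n + 1 / 2) ^ 2)

lemma ee_mul (τ x y : ℂ) : ee τ x * ee τ y = ee τ (x + y) := by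
  simp only [ee, ← Complex.exp_add]; congr 1; ring

lemma ee_scale (τ x c : ℂ) : ee (c * τ) x = ee τ (c * x) := by
  simp only [ee]; congr 1; ring

lemma neg_one_zpow_exp (n : ℤ) : ((-1 : ℂ)) ^ n = cexp (Real.pi * I * n) := by
  rw [mul_comm _ (n : ℂ), Complex.exp_int_mul, Complex.exp_pi_mul_I]

lemma th3_term (τ : ℂ) (n : ℤ) : ee τ (n ^ 2) = jacobiTheta₂_term n 0 τ := by
  simp only [ee, jacobiTheta₂_term]; congr 1; ring

lemma th4_term (τ : ℂ) (n : ℤ) : (-1) ^ n * ee τ (n ^ 2) = jacobiTheta₂_term n (1 / 2) τ := by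
  rw [neg_one_zpow_exp]
  simp only [ee, jacobiTheta₂_term]; rw [← Complex.exp_add]; congr 1; ring

lemma th2_term (τ : ℂ) (n : ℤ) : ee τ ((n + 1 / 2) ^ 2) =
    cexp (Real.pi * I * τ / 4) * jacobiTheta₂_term n (τ / 2) τ := by
  simp only [ee, jacobiTheta₂_term]; rw [← Complex.exp_add]; congr 1; ring

lemma th3_eq (τ : ℂ) : th3 τ = jacobiTheta₂ 0 τ := by
  simp only [th3, jacobiTheta₂, th3_term]
lemma th4_eq (τ : ℂ) : th4 τ = jacobiTheta₂ (1 / 2) τ := by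
  simp only [th4, jacobiTheta₂, th4_term]
lemma th2_eq (τ : ℂ) : th2 τ = cexp (Real.pi * I * τ / 4) * jacobiTheta₂ (τ / 2) τ := by
  simp only [th2, jacobiTheta₂, th2_term, tsum_mul_left]

lemma s3 {τ : ℂ} (h : 0 < τ.im) : Summable (fun n : ℤ => ‖ee τ (n ^ 2)‖) := by
  simp only [th3_term]; exact ((summable_jacobiTheta₂_term_iff _ _).2 h).norm
lemma s4 {τ : ℂ} (h : 0 < τ.im) : Summable (fun n : ℤ => ‖(-1) ^ n * ee τ (n ^ 2)‖) := by
  simp only [th4_term]; exact ((summable_jacobiTheta₂_term_iff _ _).2 h).norm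
lemma s2 {τ : ℂ} (h : 0 < τ.im) : Summable (fun n : ℤ => ‖ee τ ((n + 1 / 2) ^ 2)‖) := by
  simp only [th2_term]; exact (((summable_jacobiTheta₂_term_iff _ _).2 h).mul_left _).norm

/-- splitting `ℤ × ℤ` by the parity of the sum -/
def parEquiv : (ℤ × ℤ) ⊕ (ℤ × ℤ) ≃ ℤ × ℤ where
  toFun := Sum.elim (fun p => (p.1 + p.2, p.1 - p.2)) (fun p => (p.1 + p.2 + 1, p.1 - p.2))
  invFun := fun p => if (p.1 + p.2) % 2 = 0 then Sum.inl ((p.1 + p.2) / 2, (p.1 - p.2) / 2)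
    else Sum.inr ((p.1 + p.2) / 2, (p.1 - p.2) / 2)
  left_inv := by
    rintro (⟨j, k⟩ | ⟨j, k⟩)
    · show (if (j + k + (j - k)) % 2 = 0 then Sum.inl ((j + k + (j - k)) / 2, (j + k - (j - k)) / 2)
        else Sum.inr ((j + k + (j - k)) / 2, (j + k - (j - k)) / 2)) = Sum.inl (j, k)
      rw [if_pos (by omega)]
      congr 2 <;> omega
    · show (if (j + k + 1 + (j - k)) % 2 = 0 then
          Sum.inl ((j + k + 1 + (j - k)) / 2, (j + k + 1 - (j - k)) / 2)
        else Sum.inr ((j + k + 1 + (j - k)) / 2, (j + k + 1 - (j - k)) / 2)) = Sum.inr (j, k)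
      rw [if_neg (by omega)]
      congr 2 <;> omega
  right_inv := by
    rintro ⟨a, b⟩
    simp only
    split_ifs with h
    · simp only [Sum.elim_inl]; ext <;> simp only <;> omega
    · simp only [Sum.elim_inr]; ext <;> simp only <;> omega

lemma parity_split (F : ℤ × ℤ → ℂ) (hF : Summable F) :
    ∑' p, F p = ∑' p : ℤ × ℤ, F (p.1 + p.2, p.1 - p.2) + ∑' p : ℤ × ℤ, F (p.1 + p.2 + 1, p.1 - p.2) := by
  have h := (parEquiv.summable_iff (f := F)).2 hF
  rw [← parEquiv.tsum_eq F]
  have h1 : Summable (fun p : ℤ × ℤ => F (parEquiv (Sum.inl p))) := h.comp_injective Sum.inl_injective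
  have h2 : Summable (fun p : ℤ × ℤ => F (parEquiv (Sum.inr p))) := h.comp_injective Sum.inr_injective
  exact Summable.tsum_sum (f := fun s => F (parEquiv s)) h1 h2

lemma prod_split (f g : ℤ → ℂ) (hf : Summable (fun n => ‖f n‖)) (hg : Summable (fun n => ‖g n‖)) :
    (∑' n, f n) * (∑' n, g n) = ∑' p : ℤ × ℤ, f (p.1 + p.2) * g (p.1 - p.2)
      + ∑' p : ℤ × ℤ, f (p.1 + p.2 + 1) * g (p.1 - p.2) := by
  rw [tsum_mul_tsum_of_summable_norm hf hg]
  exact parity_split (fun p => f p.1 * g p.2) (summable_mul_of_summable_norm hf hg)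

lemma neg_one_zpow_mul (a b : ℤ) : ((-1 : ℂ)) ^ (a + b) * (-1) ^ (a - b) = 1 := by
  rw [← zpow_add₀ (by norm_num)]
  exact Even.neg_one_zpow ⟨a, by ring⟩

lemma neg_one_zpow_mul' (a b : ℤ) : ((-1 : ℂ)) ^ (a + b + 1) * (-1) ^ (a - b) = -1 := by
  rw [← zpow_add₀ (by norm_num)]
  exact Odd.neg_one_zpow ⟨a, by ring⟩

lemma im_two {τ : ℂ} (h : 0 < τ.im) : 0 < (2 * τ).im := by simp [h]
lemma im_three {τ : ℂ} (h : 0 < τ.im) : 0 < (3 * τ).im := by simp [h]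

lemma dup_th3 {τ : ℂ} (h : 0 < τ.im) : th3 τ ^ 2 = th3 (2 * τ) ^ 2 + th2 (2 * τ) ^ 2 := by
  simp only [sq (th3 _), sq (th2 _)]
  rw [th3, prod_split _ _ (s3 h) (s3 h)]
  rw [th3, th2, tsum_mul_tsum_of_summable_norm (s3 (im_two h)) (s3 (im_two h)),
    tsum_mul_tsum_of_summable_norm (s2 (im_two h)) (s2 (im_two h))]
  simp only [ee_scale, ee_mul]
  congr 1 <;> (congr 1; ext p; congr 1; push_cast; ring)

lemma dup_th4 {τ : ℂ} (h : 0 < τ.im) : th4 τ ^ 2 = th3 (2 * τ) ^ 2 - th2 (2 * τ) ^ 2 := by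
  simp only [sq (th3 _), sq (th2 _), sq (th4 _)]
  rw [th4, prod_split _ _ (s4 h) (s4 h)]
  rw [th3, th2, tsum_mul_tsum_of_summable_norm (s3 (im_two h)) (s3 (im_two h)),
    tsum_mul_tsum_of_summable_norm (s2 (im_two h)) (s2 (im_two h)), sub_eq_add_neg, ← tsum_neg]
  simp only [ee_scale]
  congr 1
  · congr 1; ext p
    rw [mul_mul_mul_comm, neg_one_zpow_mul, one_mul, ee_mul, ee_mul]
    congr 1; push_cast; ring
  · congr 1; ext p
    rw [mul_mul_mul_comm, neg_one_zpow_mul', neg_one_mul, ee_mul, ee_mul]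
    congr 2; push_cast; ring

lemma dup_th34 {τ : ℂ} (h : 0 < τ.im) : th3 τ * th4 τ = th4 (2 * τ) ^ 2 := by
  simp only [sq (th4 _)]
  rw [th3, th4, prod_split _ _ (s3 h) (s4 h)]
  rw [th4, tsum_mul_tsum_of_summable_norm (s4 (im_two h)) (s4 (im_two h))]
  simp only [ee_scale]
  have h0 : ∑' p : ℤ × ℤ, ee τ (((p.1 + p.2 + 1 : ℤ) : ℂ) ^ 2) * ((-1) ^ (p.1 - p.2) * ee τ (((p.1 - p.2 : ℤ) : ℂ) ^ 2)) = 0 := by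
    have hs : ∑' p : ℤ × ℤ, ee τ (((p.1 + p.2 + 1 : ℤ) : ℂ) ^ 2) * ((-1) ^ (p.1 - p.2) * ee τ (((p.1 - p.2 : ℤ) : ℂ) ^ 2))
      = - ∑' p : ℤ × ℤ, ee τ (((p.1 + p.2 + 1 : ℤ) : ℂ) ^ 2) * ((-1) ^ (p.1 - p.2) * ee τ (((p.1 - p.2 : ℤ) : ℂ) ^ 2)) := by
      let e : ℤ × ℤ ≃ ℤ × ℤ :=
        { toFun := fun p => (-1 - p.1, p.2), invFun := fun p => (-1 - p.1, p.2),
          left_inv := fun p => by simp, right_inv := fun p => by simp }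
      conv_lhs => rw [← e.tsum_eq]
      rw [← tsum_neg]
      congr 1; ext p
      simp only [e, Equiv.coe_fn_mk]
      have a : ((-1 : ℂ)) ^ (-1 - p.1 - p.2) = - (-1) ^ (p.1 - p.2) := by
        have : -1 - p.1 - p.2 = (p.1 - p.2) + (2 * (- p.1 - 1) + 1) := by ring
        rw [this, zpow_add₀ (by norm_num), Odd.neg_one_zpow ⟨_, rfl⟩]; ring
      rw [a, mul_left_comm, ee_mul, mul_left_comm, ee_mul, neg_mul]
      congr 3; push_cast; ring
    exact self_eq_neg.1 hs
  rw [h0, add_zero]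
  congr 1; ext p
  have a : ((-1 : ℂ)) ^ (p.1 - p.2) = (-1) ^ p.1 * (-1) ^ p.2 := by
    have : p.1 - p.2 = p.1 + p.2 + 2 * (- p.2) := by ring
    rw [this, zpow_add₀ (by norm_num), zpow_add₀ (by norm_num), Even.neg_one_zpow (even_two_mul _), mul_one]
  rw [a, mul_left_comm, ee_mul, mul_mul_mul_comm, ee_mul]
  congr 2; push_cast; ring

lemma dup_th2 {τ : ℂ} (h : 0 < τ.im) : th2 τ ^ 2 = 2 * (th2 (2 * τ) * th3 (2 * τ)) := by
  rw [sq, th2, prod_split _ _ (s2 h) (s2 h)]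
  rw [two_mul]
  nth_rw 2 [mul_comm (th2 _) (th3 _)]
  rw [th3, th2]
  rw [tsum_mul_tsum_of_summable_norm (s2 (im_two h)) (s3 (im_two h)),
    tsum_mul_tsum_of_summable_norm (s3 (im_two h)) (s2 (im_two h))]
  simp only [ee_scale, ee_mul]
  congr 1
  · congr 1; ext p; congr 1; push_cast; ring
  · let e : ℤ × ℤ ≃ ℤ × ℤ :=
        { toFun := fun p => (p.1 - 1, p.2), invFun := fun p => (p.1 + 1, p.2),
          left_inv := fun p => by simp, right_inv := fun p => by simp }
    rw [← e.tsum_eq]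
    congr 1; ext p
    simp only [e, Equiv.coe_fn_mk]
    congr 1; push_cast; ring

lemma quartic {τ : ℂ} (h : 0 < τ.im) : th3 τ ^ 4 = th2 τ ^ 4 + th4 τ ^ 4 := by
  have h1 := dup_th3 h
  have h2 := dup_th4 h
  have h3 := dup_th2 h
  have e : ∀ x : ℂ, x ^ 4 = (x ^ 2) ^ 2 := fun x => by ring
  rw [e, e (th2 τ), e (th4 τ), h1, h2, h3]; ring

lemma deg3 {τ : ℂ} (h : 0 < τ.im) : th3 τ * th3 (3 * τ) = th4 τ * th4 (3 * τ) + th2 τ * th2 (3 * τ) := by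
  have h' := im_three h
  have e3 : th3 τ * th3 (3 * τ) = ∑' p : ℤ × ℤ, ee τ ((p.1 + p.2) ^ 2 + 3 * (p.1 - p.2) ^ 2) +
      ∑' p : ℤ × ℤ, ee τ ((p.1 + p.2 + 1) ^ 2 + 3 * (p.1 - p.2) ^ 2) := by
    rw [th3, th3, prod_split _ _ (s3 h) (s3 h')]
    simp only [ee_scale, ee_mul]
    push_cast; rfl
  have e4 : th4 τ * th4 (3 * τ) = ∑' p : ℤ × ℤ, ee τ ((p.1 + p.2) ^ 2 + 3 * (p.1 - p.2) ^ 2) -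
      ∑' p : ℤ × ℤ, ee τ ((p.1 + p.2 + 1) ^ 2 + 3 * (p.1 - p.2) ^ 2) := by
    rw [th4, th4, prod_split _ _ (s4 h) (s4 h'), sub_eq_add_neg, ← tsum_neg]
    simp only [ee_scale]
    congr 1
    · congr 1; ext p
      rw [mul_mul_mul_comm, neg_one_zpow_mul, one_mul, ee_mul]
      push_cast; rfl
    · congr 1; ext p
      rw [mul_mul_mul_comm, neg_one_zpow_mul', neg_one_mul, ee_mul]
      push_cast; rfl
  have e2 : th2 τ * th2 (3 * τ) = ∑' p : ℤ × ℤ, ee τ ((p.1 + p.2 + 1) ^ 2 + 3 * (p.1 - p.2) ^ 2) +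
      ∑' p : ℤ × ℤ, ee τ ((p.1 + p.2 + 1) ^ 2 + 3 * (p.1 - p.2) ^ 2) := by
    rw [th2, th2, prod_split _ _ (s2 h) (s2 h')]
    simp only [ee_scale, ee_mul]
    congr 1
    · let e : ℤ × ℤ ≃ ℤ × ℤ :=
        { toFun := fun p => (p.1, p.1 - p.2), invFun := fun p => (p.1, p.1 - p.2),
          left_inv := fun p => by simp, right_inv := fun p => by simp }
      conv_rhs => rw [← e.tsum_eq]
      congr 1; ext p
      simp only [e, Equiv.coe_fn_mk]
      congr 1; push_cast; ring
    · let e : ℤ × ℤ ≃ ℤ × ℤ :=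
        { toFun := fun p => (p.2 - p.1 - 1, p.2), invFun := fun p => (p.2 - p.1 - 1, p.2),
          left_inv := fun p => by ext <;> simp only <;> omega, right_inv := fun p => by ext <;> simp only <;> omega }
      conv_rhs => rw [← e.tsum_eq]
      congr 1; ext p
      simp only [e, Equiv.coe_fn_mk]
      congr 1; push_cast; ring
  rw [e3, e4, e2]; ring

lemma th3_add_one (τ : ℂ) : th3 (τ + 1) = th4 τ := by
  rw [th3, th4]; congr 1; ext n
  rw [neg_one_zpow_exp, ee, ee, ← Complex.exp_add, Complex.exp_eq_exp_iff_exists_int]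
  obtain ⟨m, hm⟩ := Int.even_mul_succ_self (n - 1)
  refine ⟨m, ?_⟩
  have : ((n:ℂ) - 1) * (n - 1 + 1) = m + m := by exact_mod_cast hm
  linear_combination (Real.pi * I) * this

lemma th4_add_one (τ : ℂ) : th4 (τ + 1) = th3 τ := by
  rw [th3, th4]; congr 1; ext n
  rw [neg_one_zpow_exp, ee, ee, ← Complex.exp_add, Complex.exp_eq_exp_iff_exists_int]
  obtain ⟨m, hm⟩ := Int.even_mul_succ_self n
  refine ⟨m, ?_⟩
  have : (n:ℂ) * (n + 1) = m + m := by exact_mod_cast hm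
  linear_combination (Real.pi * I) * this

lemma th2_add_one (τ : ℂ) : th2 (τ + 1) = cexp (Real.pi * I / 4) * th2 τ := by
  rw [th2, th2, ← tsum_mul_left]; congr 1; ext n
  rw [ee, ee, ← Complex.exp_add, Complex.exp_eq_exp_iff_exists_int]
  obtain ⟨m, hm⟩ := Int.even_mul_succ_self n
  refine ⟨m, ?_⟩
  have : (n:ℂ) * (n + 1) = m + m := by exact_mod_cast hm
  linear_combination (Real.pi * I) * this

lemma s_transform {σ : ℂ} (h : 0 < σ.im) : ∃ c : ℂ, th3 σ = c * th3 (-1 / σ) ∧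
    th4 σ = c * th2 (-1 / σ) ∧ th2 σ = c * th4 (-1 / σ) := by
  have h0 : σ ≠ 0 := by rintro rfl; simp at h
  refine ⟨1 / (-I * σ) ^ (1 / 2 : ℂ), ?_, ?_, ?_⟩
  · rw [th3_eq, th3_eq, jacobiTheta₂_functional_equation]; simp
  · rw [th4_eq, th2_eq, jacobiTheta₂_functional_equation, ← jacobiTheta₂_neg_left (-1 / σ / 2), mul_assoc]
    congr 2
    · congr 1; field_simp; ring
    · congr 1; field_simp
  · rw [th4_eq, th2_eq, jacobiTheta₂_functional_equation]
    have e1 : σ / 2 / σ = 1 / 2 := by field_simp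
    have e2 : -Real.pi * I * (σ / 2) ^ 2 / σ = -(Real.pi * I * σ / 4) := by field_simp; ring
    rw [e1, e2, Complex.exp_neg]
    have := Complex.exp_ne_zero (Real.pi * I * σ / 4)
    field_simp

/-- The degree three complex multiplication relation at `√-5`. -/
lemma cm_relation {τ : ℂ} (h : 0 < τ.im) (h5 : τ ^ 2 = -5) :
    th4 τ ^ 4 - th2 τ ^ 4 = 2 * (Real.sqrt 2 : ℝ) * (th2 τ * th4 τ * th3 τ ^ 2) := by
  set σ : ℂ := (τ - 1) / 2 with hσ
  have hσi : 0 < σ.im := by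
    rw [hσ, show (2 : ℂ) = ((2 : ℝ) : ℂ) by norm_num, Complex.div_ofReal_im]; simp [h]
  have hne : τ - 1 ≠ 0 := by
    intro h0; rw [sub_eq_zero] at h0; rw [h0] at h; simp at h
  have h2 : 2 * σ = τ - 1 := by rw [hσ]; ring
  have h3 : 3 * (-1 / σ) = τ + 1 := by
    rw [hσ]; field_simp; linear_combination -h5
  have h0i : 0 < (-1 / σ).im := by
    have : (3 * (-1 / σ)).im = τ.im := by rw [h3]; simp
    have e : (3 * (-1 / σ)).im = 3 * (-1 / σ).im := by simp
    rw [e] at this; linarith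
  have hd := deg3 h0i
  rw [h3, th3_add_one, th4_add_one, th2_add_one] at hd
  obtain ⟨c, c3, c4, c2⟩ := s_transform hσi
  have d3 := dup_th3 hσi
  have d4 := dup_th4 hσi
  have d34 := dup_th34 hσi
  have d2 := dup_th2 hσi
  rw [h2] at d3 d4 d34 d2
  have t3 : th3 (τ - 1) = th4 τ := by rw [← th4_add_one (τ - 1)]; simp
  have t4 : th4 (τ - 1) = th3 τ := by rw [← th3_add_one (τ - 1)]; simp
  have t2 : th2 τ = cexp (Real.pi * I / 4) * th2 (τ - 1) := by rw [← th2_add_one (τ - 1)]; simp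
  set ζ := cexp (Real.pi * I / 4) with hζ
  have hz2 : ζ ^ 2 = I := by
    have e : ((2 : ℕ) : ℂ) * (Real.pi * I / 4) = Real.pi / 2 * I := by push_cast; ring
    rw [hζ, ← Complex.exp_nat_mul, e, Complex.exp_pi_div_two_mul_I]
  have hzs : ζ + -I * ζ = (Real.sqrt 2 : ℝ) := by
    have : ζ = ((Real.sqrt 2 / 2 : ℝ) : ℂ) + ((Real.sqrt 2 / 2 : ℝ) : ℂ) * I := by
      rw [hζ, show (Real.pi * I / 4 : ℂ) = ((Real.pi / 4 : ℝ) : ℂ) * I by push_cast; ring, Complex.exp_mul_I,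
        ← Complex.ofReal_cos, ← Complex.ofReal_sin, Real.cos_pi_div_four, Real.sin_pi_div_four]
    rw [this]; push_cast
    linear_combination (-((Real.sqrt 2 : ℝ) : ℂ) / 2) * Complex.I_sq
  have t2' : th2 (τ - 1) = -I * ζ * th2 τ := by
    rw [t2]; linear_combination (th2 (τ - 1)) * (Complex.I_sq) + I * th2 (τ-1) * hz2
  rw [t3, t2'] at d3 d4 d2
  rw [t4] at d34
  -- main relation
  have hm : th3 σ * th4 τ - ζ * th4 σ * th2 τ = th2 σ * th3 τ := by
    rw [c3, c4, c2]; linear_combination c * hd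
  generalize th3 σ = A at *
  generalize th4 σ = B at *
  generalize th2 σ = D at *
  generalize th2 τ = x at *
  generalize th3 τ = z at *
  generalize th4 τ = y at *
  have hsq : (A * y - ζ * B * x) ^ 2 = (D * z) ^ 2 := by rw [hm]
  have e1 : (A * y - ζ * B * x) ^ 2 = A ^ 2 * y ^ 2 - 2 * ζ * (A * B) * x * y + ζ ^ 2 * B ^ 2 * x ^ 2 := by ring
  rw [e1, d3, d4, d34, mul_pow D, d2, hz2] at hsq
  have hi3 : I ^ 3 = -I := by rw [pow_succ, Complex.I_sq]; ring
  have hi4 : I ^ 4 = 1 := Complex.I_pow_four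
  rw [← hzs]
  have e2 : (-I * ζ * x) ^ 2 = - I * x ^ 2 := by
    rw [mul_pow, mul_pow, hz2]; linear_combination (x ^ 2 * I) * Complex.I_sq
  rw [e2] at hsq
  linear_combination hsq - x ^ 4 * Complex.I_sq

end

section
open Filter

lemma final_alg_norm (a b c d H : ℝ) (ha : 0 < a) (hb : 0 < b)
    (h1 : a ^ 4 + b ^ 4 = 1) (h2 : c ^ 4 + d ^ 4 = 1)
    (h3 : b ^ 4 - a ^ 4 = 2 * Real.sqrt 2 * (a * b)) (h4 : a * c + b * d = 1)
    (hH : H * (a * b) ^ 3 = 4 * (c * d)) (hlt : H < 32) : H = 8 * (4 - Real.sqrt 15) := by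
  have hs2 : Real.sqrt 2 ^ 2 = 2 := Real.sq_sqrt (by norm_num)
  obtain ⟨w, hw⟩ : ∃ w, w = (a * b) ^ 2 := ⟨_, rfl⟩
  obtain ⟨δ, hδ⟩ : ∃ δ, δ = 2 * Real.sqrt 2 * (a * b) := ⟨_, rfl⟩
  have hwpos : 0 < w := by rw [hw]; positivity
  have hδ2 : δ ^ 2 = 8 * w := by
    rw [hδ, hw]; linear_combination (4 * (a * b) ^ 2) * hs2
  have hw1 : 4 * w ^ 2 + 8 * w = 1 := by
    rw [← hδ2, hδ, ← h3, hw]; linear_combination (a ^ 4 + b ^ 4 + 1) * h1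
  have hb4 : b ^ 4 = (1 + δ) / 2 := by rw [hδ]; linarith
  have ha4 : a ^ 4 = (1 - δ) / 2 := by rw [hδ]; linarith
  obtain ⟨p, hp⟩ : ∃ p, p = a * c := ⟨_, rfl⟩
  obtain ⟨r, hr⟩ : ∃ r, r = b * d := ⟨_, rfl⟩
  have hpr : p + r = 1 := by rw [hp, hr, h4]
  have hm : p * r = w ^ 2 * H / 4 := by
    rw [hp, hr, hw]; linear_combination (-(a * b) / 4) * hH
  have e1 : p ^ 4 + r ^ 4 + δ * (p ^ 4 - r ^ 4) = 2 * w ^ 2 := by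
    have : b ^ 4 * p ^ 4 + a ^ 4 * r ^ 4 = w ^ 2 := by
      rw [hp, hr, hw]; linear_combination (a ^ 4 * b ^ 4) * h2
    rw [hb4, ha4] at this
    linarith
  have hr' : r = 1 - p := by linarith
  obtain ⟨m, hmm⟩ : ∃ m, m = p * r := ⟨_, rfl⟩
  have e2 : p ^ 4 + r ^ 4 = 1 - 4 * m + 2 * m ^ 2 := by rw [hmm, hr']; ring
  have e3 : (p ^ 4 - r ^ 4) ^ 2 = (1 - 4 * m) * (1 - 2 * m) ^ 2 := by rw [hmm, hr']; ring
  have e4 : (1 - 4 * m + 2 * m ^ 2 - 2 * w ^ 2) ^ 2 = 8 * w * ((1 - 4 * m) * (1 - 2 * m) ^ 2) := by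
    rw [← e3, ← hδ2, ← mul_pow, ← e2]
    have : p ^ 4 + r ^ 4 - 2 * w ^ 2 = - (δ * (p ^ 4 - r ^ 4)) := by linarith
    rw [this]; ring
  have e5 : (m ^ 2 + w ^ 2) ^ 2 = 4 * w ^ 2 * m * (1 - 2 * m) ^ 2 := by
    linear_combination e4 / 4 + ((1 - 4 * m) * (1 - 2 * m) ^ 2) / 4 * hw1
  rw [← hmm] at hm
  rw [hm] at e5
  have e6 : w ^ 4 * ((w ^ 4 * H ^ 2 + 4) * (H ^ 2 - 64 * H + 64)) = 0 := by
    have hw2 : 72 * w ^ 2 - 16 * w ^ 4 = 1 := by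
      linear_combination (-(4 * w ^ 2 - 8 * w - 1)) * hw1
    linear_combination 256 * e5 - 4 * w ^ 4 * H ^ 2 * hw2
  have e7 : H ^ 2 - 64 * H + 64 = 0 := by
    have n1 : w ^ 4 ≠ 0 := by positivity
    have n2 : w ^ 4 * H ^ 2 + 4 ≠ 0 := by positivity
    simpa [n1, n2] using e6
  have hs15 : Real.sqrt 15 ^ 2 = 15 := Real.sq_sqrt (by norm_num)
  have e8 : (H - 8 * (4 - Real.sqrt 15)) * (H - 8 * (4 + Real.sqrt 15)) = 0 := by
    linear_combination e7 - 64 * hs15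
  rcases mul_eq_zero.1 e8 with h | h
  · linarith
  · have := Real.sqrt_nonneg 15
    linarith

lemma final_alg (x y z X Y Z H : ℝ) (hx : 0 < x) (hy : 0 < y) (hz : 0 < z) (hZ : 0 < Z)
    (h1 : z ^ 4 = x ^ 4 + y ^ 4) (h2 : Z ^ 4 = X ^ 4 + Y ^ 4)
    (h3 : y ^ 4 - x ^ 4 = 2 * Real.sqrt 2 * (x * y * z ^ 2)) (h4 : z * Z = y * Y + x * X)
    (hH : H * ((x * y) ^ 3 * Z ^ 2) = 4 * (z ^ 6 * (X * Y))) (hlt : H < 32) :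
    H = 8 * (4 - Real.sqrt 15) := by
  apply final_alg_norm (x / z) (y / z) (X / Z) (Y / Z) H (by positivity) (by positivity) _ _ _ _ _ hlt
  · field_simp; linarith
  · field_simp; linarith
  · field_simp; linarith
  · field_simp; linarith
  · field_simp; linarith

end

section
open Filter Complex

lemma exp_zpow_real (t : ℝ) (n : ℤ) : (Real.exp t) ^ n = Real.exp (n * t) := by
  rw [zpow_eq_exp _ (Real.exp_pos _), Real.log_exp]

lemma th3_real (t : ℝ) : th3 (I * t) = ((∑' j : ℤ, (Real.exp (-Real.pi * t)) ^ (j ^ 2) : ℝ) : ℂ) := by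
  rw [th3, Complex.ofReal_tsum]
  congr 1; ext j
  rw [exp_zpow_real, ee, Complex.ofReal_exp]
  congr 1; push_cast
  linear_combination (Real.pi * (j : ℂ) ^ 2 * t) * Complex.I_sq

lemma th4_real (t : ℝ) : th4 (I * t) = ((∑' j : ℤ, (Real.exp (-Real.pi * t)) ^ (j ^ 2) * (-1) ^ j : ℝ) : ℂ) := by
  rw [th4, Complex.ofReal_tsum]
  congr 1; ext j
  rw [exp_zpow_real, ee, Complex.ofReal_mul, Complex.ofReal_exp, mul_comm]
  congr 1
  · congr 1; push_cast
    linear_combination (Real.pi * (j : ℂ) ^ 2 * t) * Complex.I_sq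
  · push_cast; rfl

lemma th2_real (t : ℝ) : th2 (I * t) = ((Real.exp (-Real.pi * t / 4) * 
    ∑' j : ℤ, (Real.exp (-Real.pi * t)) ^ (j ^ 2) * (Real.exp (-Real.pi * t)) ^ j : ℝ) : ℂ) := by
  rw [th2, ← tsum_mul_left, Complex.ofReal_tsum]
  congr 1; ext j
  rw [exp_zpow_real, exp_zpow_real, ee, ← Real.exp_add, ← Real.exp_add, Complex.ofReal_exp]
  congr 1; push_cast
  linear_combination (Real.pi * ((j : ℂ) + 1 / 2) ^ 2 * t) * Complex.I_sq

lemma main_H (q A A' : ℝ) (hq : q = Real.exp (-Real.pi * Real.sqrt 5))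
    (hA : Tendsto (fun N : ℕ => ∏ k ∈ Finset.range N, (1 + q ^ (2 * k + 1))) atTop (nhds A))
    (hA' : Tendsto (fun N : ℕ => ∏ k ∈ Finset.range N, (1 + (q ^ 3) ^ (2 * k + 1))) atTop (nhds A'))
    (hlt : A ^ 18 / A' ^ 6 < 32) : A ^ 18 / A' ^ 6 = 8 * (4 - Real.sqrt 15) := by
  have h5 : 0 < Real.sqrt 5 := by positivity
  have h0 : 0 < q := by rw [hq]; positivity
  have h1 : q < 1 := by
    rw [hq, Real.exp_lt_one_iff]; nlinarith [Real.pi_pos]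
  obtain ⟨B, hB, hBt, z0, x0, y0, r⟩ := theta_ratio q h0 h1
  obtain ⟨B', hB', hBt', Z0, X0, Y0, R⟩ := theta_ratio (q ^ 3) (by positivity) (pow_lt_one₀ h0.le h1 (by norm_num))
  obtain rfl := tendsto_nhds_unique hA hBt
  obtain rfl := tendsto_nhds_unique hA' hBt'
  have hτ : 0 < (I * (Real.sqrt 5 : ℝ) : ℂ).im := by simp
  have hτ5 : (I * (Real.sqrt 5 : ℝ) : ℂ) ^ 2 = -5 := by
    rw [mul_pow, Complex.I_sq, ← Complex.ofReal_pow, Real.sq_sqrt (by norm_num)]; norm_num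
  have hcm := cm_relation hτ hτ5
  have hd3 := deg3 hτ
  have hq1 := quartic hτ
  have hq2 := quartic (im_three hτ)
  have e3 : 3 * (I * (Real.sqrt 5 : ℝ) : ℂ) = I * ((3 * Real.sqrt 5 : ℝ) : ℂ) := by push_cast; ring
  rw [e3] at hd3 hq2
  have hq3 : Real.exp (-Real.pi * (3 * Real.sqrt 5)) = q ^ 3 := by
    rw [hq, ← Real.exp_nat_mul]; congr 1; push_cast; ring
  set e := Real.exp (-Real.pi * Real.sqrt 5 / 4) with he
  have he3 : Real.exp (-Real.pi * (3 * Real.sqrt 5) / 4) = e ^ 3 := by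
    rw [he, ← Real.exp_nat_mul]; congr 1; push_cast; ring
  rw [th2_real, th3_real, th4_real, ← he, ← hq] at hcm hq1
  rw [th2_real, th3_real, th4_real, th2_real, th3_real, th4_real, ← he, ← hq, hq3, he3] at hd3
  rw [th2_real, th3_real, th4_real, hq3, he3] at hq2
  have hepos : 0 < e := Real.exp_pos _
  generalize (∑' j : ℤ, q ^ (j ^ 2)) = z at *
  generalize (∑' j : ℤ, q ^ (j ^ 2) * q ^ j) = x at *
  generalize (∑' j : ℤ, q ^ (j ^ 2) * (-1) ^ j) = y at *
  generalize (∑' j : ℤ, (q ^ 3) ^ (j ^ 2)) = Z at *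
  generalize (∑' j : ℤ, (q ^ 3) ^ (j ^ 2) * (q ^ 3) ^ j) = X at *
  generalize (∑' j : ℤ, (q ^ 3) ^ (j ^ 2) * (-1) ^ j) = Y at *
  norm_cast at hcm hq1 hq2 hd3
  refine final_alg _ _ _ _ _ _ _ (mul_pos hepos x0) y0 z0 Z0 hq1 hq2 (by rw [hcm]) hd3 ?_ hlt
  rw [div_mul_eq_mul_div, div_eq_iff (by positivity)]
  have c1 : A ^ 18 * ((e * x * y) ^ 3 * Z ^ 2) = (A ^ 6 * (x * y)) ^ 3 * e ^ 3 * Z ^ 2 := by ring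
  rw [c1, ← r]
  linear_combination (4 * z ^ 6 * e ^ 3) * R

end

section
open Filter

lemma hasSum_of_eq {ι E : Type} [AddCommMonoid E] [TopologicalSpace E] {f g : ι → E} {a b : E}
    (h : HasSum f a) (h1 : ∀ i, g i = f i) (h2 : b = a) : HasSum g b := by
  obtain rfl : g = f := funext h1
  rw [h2]; exact h

lemma coth_nat_sum (a : ℝ) (ha : 0 < a) :
    HasSum (fun n : ℕ => 1 / (((n : ℝ) + 1) ^ 2 + a ^ 2))
      ((Real.pi * (Real.cosh (Real.pi * a) / Real.sinh (Real.pi * a)) / a - 1 / a ^ 2) / 2) := by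
  have hx : (Complex.I * (a : ℂ)) ∈ Complex.integerComplement := by
    rw [Complex.mem_integerComplement_iff]
    rintro ⟨n, hn⟩
    have := congrArg Complex.im hn
    simp at this
    exact ha.ne this
  have haC : (a : ℂ) ≠ 0 := by exact_mod_cast ha.ne'
  have h1 := cot_series_rep' hx
  have hs := (summable_cotTerm hx).hasSum
  have h2 : ∀ n : ℕ, cotTerm (Complex.I * (a : ℂ)) n =
      (-2 * Complex.I * a) * ((1 / (((n : ℝ) + 1) ^ 2 + a ^ 2) : ℝ) : ℂ) := by
    intro n
    rw [cotTerm_identity hx]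
    have e1 : ((Complex.I * (a : ℂ)) + ((n : ℂ) + 1)) * ((Complex.I * (a : ℂ)) - ((n : ℂ) + 1)) =
       - (((((n : ℝ) + 1) ^ 2 + a ^ 2 : ℝ)) : ℂ) := by
      push_cast
      linear_combination (a : ℂ) ^ 2 * Complex.I_sq
    rw [e1]
    push_cast
    rw [div_neg, one_div]; ring
  have h3 : Complex.cot (Real.pi * (Complex.I * (a : ℂ))) =
      - Complex.I * ((Real.cosh (Real.pi * a) / Real.sinh (Real.pi * a) : ℝ) : ℂ) := by
    have : (Real.pi * (Complex.I * (a : ℂ))) = ((Real.pi * a : ℝ) : ℂ) * Complex.I := by push_cast; ring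
    rw [this, Complex.cot, Complex.cos_mul_I, Complex.sin_mul_I]
    push_cast
    rw [mul_comm (Complex.sinh _), div_mul_eq_div_div_swap, Complex.div_I]
    ring
  have h4 : HasSum (fun n => cotTerm (Complex.I * (a : ℂ)) n) (Real.pi * Complex.cot (Real.pi * (Complex.I * (a : ℂ))) - 1 / (Complex.I * (a : ℂ))) := by
    rw [h1]; exact hs
  have h5 := h4.mul_left ((-2 * Complex.I * a)⁻¹)
  rw [← Complex.hasSum_ofReal]
  have hI := Complex.I_ne_zero
  have hII := Complex.I_sq
  refine hasSum_of_eq h5 ?_ ?_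
  · intro n
    rw [h2]
    field_simp
  · rw [h3]
    push_cast
    field_simp
    rw [hII]; ring

lemma alt_nat_sum (a : ℝ) (ha : 0 < a) :
    HasSum (fun n : ℕ => (-1) ^ (n + 1) / (((n : ℝ) + 1) ^ 2 + a ^ 2))
      ((Real.pi / (a * Real.sinh (Real.pi * a)) - 1 / a ^ 2) / 2) := by
  have hS := coth_nat_sum a ha
  have hO := (coth_nat_sum (a / 2) (by positivity)).mul_left (1 / 4)
  have hO' : HasSum (fun k : ℕ => 1 / ((((2 * k + 1 : ℕ) : ℝ) + 1) ^ 2 + a ^ 2)) (1 / 4 *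
      ((Real.pi * (Real.cosh (Real.pi * (a / 2)) / Real.sinh (Real.pi * (a / 2))) / (a / 2) - 1 / (a / 2) ^ 2) / 2)) := by
    refine hasSum_of_eq hO ?_ rfl
    intro k
    push_cast
    have : 0 < ((k : ℝ) + 1) ^ 2 + (a / 2) ^ 2 := by positivity
    field_simp; ring
  have hE : Summable (fun k : ℕ => 1 / ((((2 * k : ℕ) : ℝ) + 1) ^ 2 + a ^ 2)) :=
    hS.summable.comp_injective (i := fun k : ℕ => 2 * k) (fun x y h => by simpa using h)
  obtain ⟨e, hE⟩ := hE
  have hu := hS.unique (HasSum.even_add_odd (f := fun n : ℕ => 1 / (((n : ℝ) + 1) ^ 2 + a ^ 2)) hE hO')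
  have hfin := HasSum.even_add_odd (f := fun n : ℕ => (-1) ^ (n + 1) / (((n : ℝ) + 1) ^ 2 + a ^ 2))
    (m := -e) (by
      refine hasSum_of_eq hE.neg ?_ rfl
      intro k; rw [pow_succ, pow_mul]; norm_num; ring) (by
      refine hasSum_of_eq hO' ?_ rfl
      intro k; rw [pow_succ, pow_succ, pow_mul]; norm_num)
  refine hasSum_of_eq hfin (fun _ => rfl) ?_
  have he : e = _ := eq_sub_of_add_eq hu.symm
  rw [he]
  have d1 : Real.sinh (Real.pi * a) = 2 * Real.sinh (Real.pi * (a / 2)) * Real.cosh (Real.pi * (a / 2)) := by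
    rw [← Real.sinh_two_mul]; congr 1; ring
  have d2 : Real.cosh (Real.pi * a) = Real.cosh (Real.pi * (a / 2)) ^ 2 + Real.sinh (Real.pi * (a / 2)) ^ 2 := by
    rw [← Real.cosh_two_mul]; congr 1; ring
  have d3 := Real.cosh_sq (Real.pi * (a / 2))
  rw [d1, d2]
  have p1 : 0 < Real.sinh (Real.pi * (a / 2)) := Real.sinh_pos_iff.2 (by positivity)
  have p2 := Real.cosh_pos (Real.pi * (a / 2))
  generalize Real.sinh (Real.pi * (a / 2)) = s at *
  generalize Real.cosh (Real.pi * (a / 2)) = c at *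
  field_simp
  ring_nf
  linear_combination (-4 * Real.pi * a) * d3

lemma alt_int_sum (a : ℝ) (ha : 0 < a) :
    HasSum (fun m : ℤ => (-1 : ℝ) ^ m / ((m : ℝ) ^ 2 + a ^ 2))
      (Real.pi / (a * Real.sinh (Real.pi * a))) := by
  have h := alt_nat_sum a ha
  set S := (Real.pi / (a * Real.sinh (Real.pi * a)) - 1 / a ^ 2) / 2 with hSdef
  set f : ℤ → ℝ := fun m : ℤ => (-1 : ℝ) ^ m / ((m : ℝ) ^ 2 + a ^ 2) with hf
  have h1 : HasSum (fun n : ℕ => f ((n : ℕ) : ℤ)) (S + 1 / a ^ 2) := by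
    rw [← hasSum_nat_add_iff' 1]
    refine hasSum_of_eq h ?_ ?_
    · intro n
      simp only [hf]
      rw [zpow_natCast]
      push_cast
      ring
    · simp [hf]
  have h2 : HasSum (fun n : ℕ => f (-((n : ℤ) + 1))) S := by
    refine hasSum_of_eq h ?_ rfl
    intro n
    simp only [hf]
    have : (-1 : ℝ) ^ (-((n : ℤ) + 1)) = (-1) ^ (n + 1) := by
      rw [zpow_neg, ← inv_zpow, inv_neg_one, ← zpow_natCast]; norm_cast
    rw [this]
    push_cast
    ring
  have h3 := HasSum.of_nat_of_neg_add_one h1 h2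
  refine hasSum_of_eq h3 (fun _ => rfl) ?_
  rw [hSdef]
  ring

lemma inv_sinh_sum (s : ℝ) (hs : 0 < s) :
    HasSum (fun l : ℕ => 2 * Real.exp (-s) ^ (2 * l + 1)) (1 / Real.sinh s) := by
  have h1 : Real.exp (-s) < 1 := by simpa using hs
  have h0 := Real.exp_pos (-s)
  have h := (hasSum_geometric_of_lt_one (r := Real.exp (-s) ^ 2) (by positivity) (pow_lt_one₀ h0.le h1 (by norm_num))).mul_left
    (2 * Real.exp (-s))
  refine hasSum_of_eq h ?_ ?_
  · intro l; ring
  · have e : Real.exp s = (Real.exp (-s))⁻¹ := by rw [Real.exp_neg, inv_inv]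
    rw [Real.sinh_eq, e]
    have : 1 - Real.exp (-s) ^ 2 > 0 := by nlinarith
    generalize Real.exp (-s) = x at *
    have h2 : x⁻¹ - x = (1 - x ^ 2) / x := by field_simp
    rw [h2]
    field_simp

end
section
open Filter

lemma log_mod_sum (r : ℝ) (h0 : 0 < r) (h1 : r < 1) :
    HasSum (fun n : ℤ => (-1 : ℝ) ^ n * r ^ (3 * n + 1).natAbs / ((3 * n + 1).natAbs : ℝ))
      (Real.log (1 + r) - 1 / 3 * Real.log (1 + r ^ 3)) := by
  have key : ∀ s : ℝ, 0 < s → s < 1 →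
      HasSum (fun k : ℕ => (-1 : ℝ) ^ k * s ^ (k + 1) / ((k : ℝ) + 1)) (Real.log (1 + s)) := by
    intro s s0 s1
    have h := (Real.hasSum_pow_div_log_of_abs_lt_one (x := -s) (by rw [abs_neg, abs_of_pos s0]; exact s1)).neg
    refine hasSum_of_eq h ?_ ?_
    · intro k
      rw [neg_pow s, pow_succ (-1 : ℝ) k]
      ring
    · rw [neg_neg, sub_neg_eq_add]
  set g : ℕ → ℝ := fun k : ℕ => (-1 : ℝ) ^ k * r ^ (k + 1) / ((k : ℝ) + 1) with hg
  have hG : HasSum g _ := key r h0 h1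
  have hr := key (r ^ 3) (by positivity) (pow_lt_one₀ h0.le h1 (by norm_num))
  have hs : ∀ i : ℕ, Summable fun n : ℕ => g (3 * n + i) := fun i =>
    hG.summable.comp_injective (i := fun n : ℕ => 3 * n + i) (fun x y h => by simpa using h)
  obtain ⟨a, ha⟩ := hs 0
  obtain ⟨b, hb⟩ := hs 1
  have hc : HasSum (fun n : ℕ => g (3 * n + 2)) (1 / 3 * Real.log (1 + r ^ 3)) := by
    refine hasSum_of_eq (hr.mul_left (1 / 3)) ?_ rfl
    intro n
    simp only [hg]
    have e1 : (-1 : ℝ) ^ (3 * n + 2) = (-1) ^ n := by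
      rw [pow_add, pow_mul]; norm_num
    rw [e1, ← pow_mul]
    push_cast
    have : (n : ℝ) + 1 ≠ 0 := by positivity
    have e2 : 3 * (n : ℝ) + 2 + 1 = 3 * (n + 1) := by ring
    rw [e2]
    have e3 : 3 * n + 2 + 1 = 3 * (n + 1) := by ring
    rw [e3]
    field_simp
  have hsum : a + b + 1 / 3 * Real.log (1 + r ^ 3) = Real.log (1 + r) := by
    have h2 := ((Nat.divModEquiv 3).symm.hasSum_iff (f := g)).2 hG
    have h3 := h2.prod_fiberwise (fun n => hasSum_fintype _)
    refine ((ha.add hb).add hc).unique (hasSum_of_eq h3 ?_ rfl)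
    intro n
    simp [Fin.sum_univ_three, Nat.divModEquiv, mul_comm]
  have hZ := HasSum.of_nat_of_neg_add_one (f := fun n : ℤ => (-1 : ℝ) ^ n * r ^ (3 * n + 1).natAbs / ((3 * n + 1).natAbs : ℝ))
    (m := a) (m' := b) (by
      refine hasSum_of_eq ha ?_ rfl
      intro n
      simp only [hg]
      have e0 : (3 * (n : ℤ) + 1).natAbs = 3 * n + 1 := by omega
      have e1 : (-1 : ℝ) ^ (3 * n + 0) = (-1) ^ n := by
        rw [pow_add, pow_mul]; norm_num
      rw [e0, e1, zpow_natCast]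
      push_cast
      ring_nf) (by
      refine hasSum_of_eq hb ?_ rfl
      intro n
      simp only [hg]
      have e0 : (3 * (-((n : ℤ) + 1)) + 1).natAbs = 3 * n + 2 := by omega
      have e1 : (-1 : ℝ) ^ (3 * n + 1) = (-1) ^ (n + 1) := by
        rw [pow_add, pow_mul, pow_succ]; norm_num
        rw [pow_succ]; ring
      have e2 : (-1 : ℝ) ^ (-((n : ℤ) + 1)) = (-1) ^ (n + 1) := by
        rw [zpow_neg, ← inv_zpow, inv_neg_one, ← zpow_natCast]; norm_cast
      rw [e0, e1, e2]
      push_cast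
      ring_nf)
  refine hasSum_of_eq hZ (fun _ => rfl) ?_
  linarith

lemma fubini_sum (q A A' : ℝ) (hq : q = Real.exp (-Real.pi * Real.sqrt 5)) (hA0 : 0 < A) (hA0' : 0 < A')
    (hA : Tendsto (fun N : ℕ => ∏ k ∈ Finset.range N, (1 + q ^ (2 * k + 1))) atTop (nhds A))
    (hA' : Tendsto (fun N : ℕ => ∏ k ∈ Finset.range N, (1 + (q ^ 3) ^ (2 * k + 1))) atTop (nhds A')) :
    HasSum (fun n : ℤ => ∑' m : ℤ, (-1 : ℝ) ^ (m + n) / ((m : ℝ) ^ 2 + 5 * (3 * (n : ℝ) + 1) ^ 2))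
      (2 * Real.pi / Real.sqrt 5 * (Real.log A - 1 / 3 * Real.log A')) := by
  have h5 : 0 < Real.sqrt 5 := by positivity
  have h0 : 0 < q := by rw [hq]; positivity
  have h1 : q < 1 := by
    rw [hq, Real.exp_lt_one_iff]; nlinarith [Real.pi_pos]
  set F : ℤ × ℕ → ℝ := fun p => (-1 : ℝ) ^ p.1 * (q ^ (2 * p.2 + 1)) ^ (3 * p.1 + 1).natAbs / ((3 * p.1 + 1).natAbs : ℝ) with hF
  have hKpos : ∀ n : ℤ, 1 ≤ (3 * n + 1).natAbs := fun n => by omega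
  have habs : ∀ n : ℤ, |(-1 : ℝ) ^ n| = 1 := fun n => by rw [abs_zpow]; simp
  have hsum : Summable F := by
    have s1 := (log_mod_sum q h0 h1).summable.abs
    have s2 := summable_geometric_of_lt_one (r := q ^ 2) (by positivity) (pow_lt_one₀ h0.le h1 (by norm_num))
    have s3 := s1.mul_of_nonneg s2 (fun _ => abs_nonneg _) (fun _ => by positivity)
    refine Summable.of_norm_bounded s3 ?_
    rintro ⟨n, l⟩
    simp only [hF, Real.norm_eq_abs]
    rw [abs_div, abs_div, abs_mul, abs_mul, habs, one_mul, one_mul, div_mul_eq_mul_div]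
    gcongr
    rw [abs_of_pos (by positivity), abs_of_pos (by positivity), ← pow_mul, ← pow_mul, ← pow_add]
    apply pow_le_pow_of_le_one h0.le h1.le
    nlinarith [hKpos n]
  obtain ⟨t, ht⟩ := hsum
  have hn := ht.prod_fiberwise (g := fun n : ℤ => (-1 : ℝ) ^ n * (1 / 2 * (1 / Real.sinh (Real.pi * Real.sqrt 5 * (3 * n + 1).natAbs))) / ((3 * n + 1).natAbs : ℝ)) (by
    intro n
    have hk : (0 : ℝ) < (3 * n + 1).natAbs := by exact_mod_cast hKpos n
    have h := (((inv_sinh_sum (Real.pi * Real.sqrt 5 * (3 * n + 1).natAbs) (by positivity)).mul_left (1 / 2)).mul_left ((-1 : ℝ) ^ n)).div_const ((3 * n + 1).natAbs : ℝ)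
    refine hasSum_of_eq h ?_ rfl
    intro l
    have e : Real.exp (-(Real.pi * Real.sqrt 5 * (3 * n + 1).natAbs)) = q ^ (3 * n + 1).natAbs := by
      rw [hq, ← Real.exp_nat_mul]; congr 1; ring
    rw [e]
    simp only [hF]
    rw [← pow_mul, ← pow_mul, mul_comm (2 * l + 1)]
    ring)
  have hl := ((Equiv.prodComm ℕ ℤ).hasSum_iff.2 ht).prod_fiberwise (fun l =>
    log_mod_sum (q ^ (2 * l + 1)) (by positivity) (pow_lt_one₀ h0.le h1 (by omega)))
  have hl1 := hl.tendsto_sum_nat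
  have l1 := (Real.continuousAt_log hA0.ne').tendsto.comp hA
  have l2 := (Real.continuousAt_log hA0'.ne').tendsto.comp hA'
  have l3 := l1.sub (l2.const_mul (1 / 3))
  have ht' : t = Real.log A - 1 / 3 * Real.log A' := by
    refine tendsto_nhds_unique hl1 (l3.congr ?_)
    intro N
    simp only [Function.comp]
    rw [Real.log_prod (fun i _ => by positivity), Real.log_prod (fun i _ => by positivity),
      Finset.sum_sub_distrib, Finset.mul_sum]
    congr 1
    refine Finset.sum_congr rfl fun i _ => ?_
    rw [← pow_mul, ← pow_mul, mul_comm 3]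
  rw [← ht']
  refine hasSum_of_eq (hn.mul_left (2 * Real.pi / Real.sqrt 5)) ?_ rfl
  intro n
  have hk : (0 : ℝ) < (3 * n + 1).natAbs := by exact_mod_cast hKpos n
  have hsq : (((3 * n + 1).natAbs : ℕ) : ℝ) ^ 2 = (3 * (n : ℝ) + 1) ^ 2 := by
    rw [Nat.cast_natAbs]
    push_cast
    rw [sq_abs]
  have ha := alt_int_sum (Real.sqrt 5 * (3 * n + 1).natAbs) (by positivity)
  have ha2 := ha.mul_left ((-1 : ℝ) ^ n)
  have ha3 : HasSum (fun m : ℤ => (-1 : ℝ) ^ (m + n) / ((m : ℝ) ^ 2 + 5 * (3 * (n : ℝ) + 1) ^ 2))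
      ((-1) ^ n * (Real.pi / (Real.sqrt 5 * (3 * n + 1).natAbs * Real.sinh (Real.pi * (Real.sqrt 5 * (3 * n + 1).natAbs))))) := by
    refine hasSum_of_eq ha2 ?_ rfl
    intro m
    rw [zpow_add₀ (by norm_num), mul_pow, Real.sq_sqrt (by norm_num), hsq]
    ring
  rw [ha3.tsum_eq, ← mul_assoc Real.pi]
  have hs : 0 < Real.sinh (Real.pi * Real.sqrt 5 * (3 * n + 1).natAbs) := Real.sinh_pos_iff.2 (by positivity)
  field_simp

lemma prod_bound (q A A' : ℝ) (hq : q = Real.exp (-Real.pi * Real.sqrt 5))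
    (hA : Tendsto (fun N : ℕ => ∏ k ∈ Finset.range N, (1 + q ^ (2 * k + 1))) atTop (nhds A))
    (hA' : Tendsto (fun N : ℕ => ∏ k ∈ Finset.range N, (1 + (q ^ 3) ^ (2 * k + 1))) atTop (nhds A')) :
    A ^ 18 / A' ^ 6 < 32 := by
  have h5 : 2 < Real.sqrt 5 := by
    rw [Real.lt_sqrt (by norm_num)]; norm_num
  have h0 : 0 < q := by rw [hq]; positivity
  have hq6 : q ≤ 1 / 64 := by
    have e1 : q ≤ Real.exp (-6) := by
      rw [hq, Real.exp_le_exp]; nlinarith [Real.pi_gt_three]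
    have e2 : (64 : ℝ) ≤ Real.exp 6 := by
      have : (2 : ℝ) ≤ Real.exp 1 := by linarith [Real.exp_one_gt_d9]
      calc (64 : ℝ) = 2 ^ 6 := by norm_num
        _ ≤ Real.exp 1 ^ 6 := by gcongr
        _ = Real.exp 6 := by rw [← Real.exp_nat_mul]; norm_num
    rw [Real.exp_neg] at e1
    refine e1.trans ?_
    rw [one_div]
    gcongr
  have h1 : q < 1 := by linarith
  have hA1 : 1 ≤ A' := by
    refine ge_of_tendsto' hA' fun N => ?_
    have h : ∏ k ∈ Finset.range N, (1 : ℝ) ≤ ∏ k ∈ Finset.range N, (1 + (q ^ 3) ^ (2 * k + 1)) := by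
      refine Finset.prod_le_prod (fun _ _ => zero_le_one) fun i _ => ?_
      have : 0 < (q ^ 3) ^ (2 * i + 1) := by positivity
      linarith
    simpa using h
  have hAn : 0 ≤ A := ge_of_tendsto' hA fun N => by positivity
  have hA2 : A ≤ Real.exp (1 / 18) := by
    refine le_of_tendsto' hA fun N => ?_
    calc ∏ k ∈ Finset.range N, (1 + q ^ (2 * k + 1)) ≤ ∏ k ∈ Finset.range N, Real.exp (q ^ (2 * k + 1)) := by
          gcongr with i
          rw [add_comm]; exact Real.add_one_le_exp _
      _ = Real.exp (∑ k ∈ Finset.range N, q ^ (2 * k + 1)) := (Real.exp_sum _ _).symm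
      _ ≤ Real.exp (1 / 18) := by
          rw [Real.exp_le_exp]
          have hg := (hasSum_geometric_of_lt_one (r := q ^ 2) (by positivity) (pow_lt_one₀ h0.le h1 (by norm_num))).mul_left q
          have h3 := sum_le_hasSum (Finset.range N) (fun i _ => by positivity) hg
          have h4 : ∑ k ∈ Finset.range N, q ^ (2 * k + 1) = ∑ k ∈ Finset.range N, q * (q ^ 2) ^ k :=
            Finset.sum_congr rfl fun i _ => by ring
          rw [h4]
          refine h3.trans ?_
          have h5 : 0 < 1 - q ^ 2 := by nlinarith
          rw [← div_eq_mul_inv, div_le_iff₀ h5]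
          nlinarith
  have h6 : A ^ 18 < 32 := by
    calc A ^ 18 ≤ Real.exp (1 / 18) ^ 18 := by gcongr
      _ = Real.exp 1 := by rw [← Real.exp_nat_mul]; norm_num
      _ < 32 := by linarith [Real.exp_one_lt_d9]
  have h7 : 1 ≤ A' ^ 6 := one_le_pow₀ hA1
  rw [div_lt_iff₀ (by positivity)]
  linarith

end


open Filter

/-- `∑∑ (-1)^{m+n}/(m² + 5(3n+1)²) = (π/(9√5)) log(8(4 - √15))`. -/
theorem F31_at_inv_sqrt_five :
    Tendsto (fun N : ℕ => ∑ n ∈ Finset.Ioo (-(N : ℤ)) (N : ℤ),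
        ∑' m : ℤ, (-1 : ℝ) ^ (m + n) / ((m : ℝ) ^ 2 + 5 * (3 * (n : ℝ) + 1) ^ 2))
      atTop
      (nhds (Real.pi / (9 * Real.sqrt 5) * Real.log (8 * (4 - Real.sqrt 15)))) := by
  obtain ⟨q, hq⟩ : ∃ q, q = Real.exp (-Real.pi * Real.sqrt 5) := ⟨_, rfl⟩
  have h5 : 0 < Real.sqrt 5 := by positivity
  have h0 : 0 < q := by rw [hq]; positivity
  have h1 : q < 1 := by
    rw [hq, Real.exp_lt_one_iff]; nlinarith [Real.pi_pos]
  have h03 : 0 < q ^ 3 := by positivity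
  have h13 : q ^ 3 < 1 := pow_lt_one₀ h0.le h1 (by norm_num)
  obtain ⟨A, hA0, hA⟩ := prod_limit (fun k : ℕ => q ^ (2 * k + 1)) (summable_odd_pow q h0 h1).norm
    (fun i => by positivity)
  obtain ⟨A', hA0', hA'⟩ := prod_limit (fun k : ℕ => (q ^ 3) ^ (2 * k + 1)) (summable_odd_pow _ h03 h13).norm
    (fun i => by positivity)
  have hlt := prod_bound q A A' hq hA hA'
  have hH := main_H q A A' hq hA hA' hlt
  have hS := fubini_sum q A A' hq hA0 hA0' hA hA'
  have hlog : Real.log (8 * (4 - Real.sqrt 15)) = 18 * Real.log A - 6 * Real.log A' := by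
    rw [← hH, Real.log_div (by positivity) (by positivity), Real.log_pow, Real.log_pow]
    norm_num
  have hval : Real.pi / (9 * Real.sqrt 5) * Real.log (8 * (4 - Real.sqrt 15)) =
      2 * Real.pi / Real.sqrt 5 * (Real.log A - 1 / 3 * Real.log A') := by
    rw [hlog]
    field_simp
    ring
  rw [hval]
  have ht : Filter.Tendsto (fun N : ℕ => Finset.Ioo (-(N : ℤ)) (N : ℤ)) Filter.atTop Filter.atTop := by
    refine Filter.tendsto_atTop_finset_of_monotone ?_ ?_
    · intro a b hab
      apply Finset.Ioo_subset_Ioo <;> omega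
    · intro x
      exact ⟨x.natAbs + 1, by rw [Finset.mem_Ioo]; omega⟩
  have hS' := hS
  unfold HasSum at hS'
  rw [SummationFilter.unconditional_filter] at hS'
  exact hS'.comp ht
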